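/- Let n ≥ 1 and let Q_{4n} be the generalized quaternion (dicyclic) group of order 4n, with presentation ⟨x, y | x^{2n} = y⁴ = 1, x^n = y², y⁻¹xy = x⁻¹⟩. The power graph of Q_{4n} is chordal if and only if there exist an odd prime p and natural numbers a, b with 2n = 2^a · p^b and a ≤ 1 or b ≤ 1. -/

import Mathlib

/-- The power graph of a group: distinct `x` and `y` are adjacent iff one is a power
of the other. -/
def powerGraph (G : Type*) [Group G] : SimpleGraph G :=
  SimpleGraph.fromRel (fun x y => x ∈ Subgroup.zpowers y)

/-- A graph is chordal if it has no induced cycle on at least 4 vertices. -/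
def IsChordal {V : Type*} (Γ : SimpleGraph V) : Prop :=
  ∀ n : ℕ, 4 ≤ n → IsEmpty (SimpleGraph.cycleGraph n ↪g Γ)

/-!
A vertex is simplicial if its neighbours are pairwise adjacent. No vertex of a cycle of length at
least `4` is simplicial, so induced cycles avoid the simplicial vertices of a graph. In `Q_{4n}`
every element outside `⟨x⟩` generates a maximal cyclic subgroup of order `4`, which makes it
simplicial, so only the cyclic group `⟨x⟩` of order `2n` matters.

In a finite cyclic group the power graph is the comparability graph of divisibility of orders. If
the group order divides `p ^ s * q` with `p`, `q` prime, the elements of order prime to `q` form a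
clique closed under taking powers, the remaining elements form another clique, and in every finite
induced subgraph an element of the first clique of maximal order (or any element, if the first
clique is missed) is simplicial. Otherwise the order is divisible by `p ^ 2 * q ^ 2` or by
`p * q * r` for distinct primes, and there are induced cycles through elements of orders
`p, p * q ^ 2, q, p ^ 2 * q` or `p, p * q, q, q * r, r, p * r`.
-/

open SimpleGraph Subgroup

section Simplicial

variable {V W : Type*} {Γ : SimpleGraph V} {Δ : SimpleGraph W}

/-- A vertex of a graph is simplicial if its neighbours form a clique. Induced cycles of length at
least `4` cannot pass through such a vertex. -/
def IsSimplicial (Γ : SimpleGraph V) (v : V) : Prop :=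
  Γ.IsClique (Γ.neighborSet v)

theorem IsSimplicial.of_embedding (f : Γ ↪g Δ) {v : V} (hv : IsSimplicial Δ (f v)) :
    IsSimplicial Γ v := fun _ hx _ hy hxy =>
  f.map_adj_iff.1 <| hv (f.map_adj_iff.2 hx) (f.map_adj_iff.2 hy) (f.injective.ne hxy)

open Fin.CommRing in
theorem not_isSimplicial_cycleGraph {n : ℕ} (hn : 4 ≤ n) (i : Fin n) :
    ¬ IsSimplicial (cycleGraph n) i := by
  obtain ⟨m, rfl⟩ := Nat.exists_eq_add_of_le' hn
  have natCast_ne_zero (k : ℕ) (hk : 0 < k) (hk' : k < m + 4) : (k : Fin (m + 4)) ≠ 0 := by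
    rw [ne_eq, Fin.natCast_eq_zero]
    exact Nat.not_dvd_of_pos_of_lt hk hk'
  have two_ne_zero := natCast_ne_zero 2 (by lia) (by lia)
  have one_ne_zero := natCast_ne_zero 1 (by lia) (by lia)
  have three_ne_zero := natCast_ne_zero 3 (by lia) (by lia)
  push_cast at two_ne_zero one_ne_zero three_ne_zero
  intro h
  have next_adj : (cycleGraph (m + 4)).Adj i (i + 1) := cycleGraph_adj.2 (.inr (by ring))
  have prev_adj : (cycleGraph (m + 4)).Adj i (i - 1) := cycleGraph_adj.2 (.inl (by ring))
  have next_ne_prev : i + 1 ≠ i - 1 := fun h => two_ne_zero (by linear_combination h)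
  rcases cycleGraph_adj.1 (h next_adj prev_adj next_ne_prev) with h | h
  · exact one_ne_zero (by linear_combination h)
  · exact three_ne_zero (by linear_combination -h)

theorem isChordal_iff_of_isSimplicial (e : Γ ↪g Δ)
    (h : ∀ w ∉ Set.range e, IsSimplicial Δ w) : IsChordal Δ ↔ IsChordal Γ := by
  refine ⟨fun hΔ n hn => ⟨fun f => (hΔ n hn).false (e.comp f)⟩, fun hΓ n hn => ⟨fun f => ?_⟩⟩
  have hf (i : Fin n) : f i ∈ Set.range e := by
    by_contra hi
    exact not_isSimplicial_cycleGraph hn i (.of_embedding f (h _ hi))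
  choose g hg using hf
  have hg_inj : g.Injective := fun i j hij => f.injective (by rw [← hg, ← hg, hij])
  have hg_adj (i j : Fin n) : Γ.Adj (g i) (g j) ↔ (cycleGraph n).Adj i j := by
    rw [← e.map_adj_iff, hg, hg, f.map_adj_iff]
  exact (hΓ n hn).false ⟨⟨g, hg_inj⟩, hg_adj _ _⟩

end Simplicial

section Comparability

variable {V W P Q : Type*} [Preorder P] [Preorder Q]

/-- The comparability graph of a family `f : V → P` in a preorder, with distinct `x` and `y` joined
when `f x` and `f y` are comparable. Indexing by a family covers both power graphs, where `f` is
`Subgroup.zpowers`, and finite configurations of exponent vectors. -/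
def comparabilityGraph (f : V → P) : SimpleGraph V :=
  SimpleGraph.fromRel fun x y => f x ≤ f y

theorem comparabilityGraph_adj {f : V → P} {x y : V} :
    (comparabilityGraph f).Adj x y ↔ x ≠ y ∧ (f x ≤ f y ∨ f y ≤ f x) :=
  SimpleGraph.fromRel_adj _ _ _

theorem comap_comparabilityGraph (f : W → P) (e : V ↪ W) :
    (comparabilityGraph f).comap e = comparabilityGraph (f ∘ e) := by
  ext x y
  simp [comparabilityGraph_adj]

/-- A map that preserves and reflects the order of the labels embeds comparability graphs. -/
def comparabilityGraphEmbedding {f : V → P} {g : W → Q} (e : V ↪ W)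
    (h : ∀ x y, g (e x) ≤ g (e y) ↔ f x ≤ f y) :
    comparabilityGraph f ↪g comparabilityGraph g where
  toEmbedding := e
  map_rel_iff' := by simp [comparabilityGraph_adj, h]

section TwoCliques

variable {f : V → P} {L : Set P}

theorem exists_isSimplicial_comparabilityGraph [Finite V] [Nonempty V] (hL : IsLowerSet L)
    (lower : (comparabilityGraph f).IsClique (f ⁻¹' L))
    (upper : (comparabilityGraph f).IsClique (f ⁻¹' Lᶜ)) :
    ∃ v, IsSimplicial (comparabilityGraph f) v := by
  rcases (f ⁻¹' L).eq_empty_or_nonempty with hempty | hne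
  · inhabit V
    exact ⟨default, upper.subset fun x _ (hx : f x ∈ L) => hempty.subset hx⟩
  obtain ⟨v, hvL, hmax⟩ := (Set.toFinite (f ⁻¹' L)).exists_maximalFor f _ hne
  have le_of_mem {x} (hx : f x ∈ L) (hvx : (comparabilityGraph f).Adj v x) : f x ≤ f v :=
    (comparabilityGraph_adj.1 hvx).2.elim (hmax hx) id
  have ge_of_notMem {x} (hx : f x ∉ L) (hvx : (comparabilityGraph f).Adj v x) : f v ≤ f x :=
    (comparabilityGraph_adj.1 hvx).2.resolve_right fun h => hx (hL h hvL)
  refine ⟨v, fun x hvx y hvy hxy => ?_⟩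
  by_cases hx : f x ∈ L <;> by_cases hy : f y ∈ L
  · exact lower hx hy hxy
  · exact comparabilityGraph_adj.2 ⟨hxy, .inl ((le_of_mem hx hvx).trans (ge_of_notMem hy hvy))⟩
  · exact comparabilityGraph_adj.2 ⟨hxy, .inr ((le_of_mem hy hvy).trans (ge_of_notMem hx hvx))⟩
  · exact upper hx hy hxy

theorem isChordal_comparabilityGraph (hL : IsLowerSet L)
    (lower : (comparabilityGraph f).IsClique (f ⁻¹' L))
    (upper : (comparabilityGraph f).IsClique (f ⁻¹' Lᶜ)) :
    IsChordal (comparabilityGraph f) := by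
  refine fun n hn => ⟨fun e => ?_⟩
  have : Nonempty (Fin n) := ⟨⟨0, by lia⟩⟩
  have hcycle : comparabilityGraph (f ∘ e) = cycleGraph n :=
    (comap_comparabilityGraph f e.toEmbedding).symm.trans e.comap_eq
  have pullback {s : Set P} (hs : (comparabilityGraph f).IsClique (f ⁻¹' s)) :
      (comparabilityGraph (f ∘ e)).IsClique (f ∘ e ⁻¹' s) := by
    rw [hcycle]
    exact fun i hi j hj hij => e.map_adj_iff.1 (hs hi hj (e.injective.ne hij))
  obtain ⟨i, hi⟩ := exists_isSimplicial_comparabilityGraph hL (pullback lower) (pullback upper)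
  exact not_isSimplicial_cycleGraph hn i (hcycle ▸ hi)

end TwoCliques

end Comparability

section Arithmetic

theorem dvd_or_dvd_of_dvd_prime_pow {p k a b : ℕ} (hp : p.Prime) (ha : a ∣ p ^ k)
    (hb : b ∣ p ^ k) : a ∣ b ∨ b ∣ a := by
  obtain ⟨i, -, rfl⟩ := (Nat.dvd_prime_pow hp).1 ha
  obtain ⟨j, -, rfl⟩ := (Nat.dvd_prime_pow hp).1 hb
  exact (le_total i j).imp (pow_dvd_pow p) (pow_dvd_pow p)

theorem dvd_or_dvd_of_dvd_prime_pow_mul {p q k a b : ℕ} (hp : p.Prime) (hq : q.Prime)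
    (ha : a ∣ p ^ k * q) (hb : b ∣ p ^ k * q) (h : q ∣ a ↔ q ∣ b) : a ∣ b ∨ b ∣ a := by
  by_cases hqa : q ∣ a
  · obtain ⟨c, rfl⟩ := hqa
    obtain ⟨d, rfl⟩ := h.1 (dvd_mul_right q c)
    rw [mul_comm (p ^ k)] at ha hb
    exact (dvd_or_dvd_of_dvd_prime_pow hp (Nat.dvd_of_mul_dvd_mul_left hq.pos ha)
      (Nat.dvd_of_mul_dvd_mul_left hq.pos hb)).imp (mul_dvd_mul_left q) (mul_dvd_mul_left q)
  · have hqb : ¬ q ∣ b := mt h.2 hqa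
    exact dvd_or_dvd_of_dvd_prime_pow hp
      ((hq.coprime_iff_not_dvd.2 hqa).symm.dvd_of_dvd_mul_right ha)
      ((hq.coprime_iff_not_dvd.2 hqb).symm.dvd_of_dvd_mul_right hb)

theorem prod_prime_pow_dvd_prod_prime_pow_iff {ι : Type*} [Fintype ι] {p : ι → ℕ}
    (hp : ∀ i, (p i).Prime) (hinj : p.Injective) {u v : ι → ℕ} :
    ∏ i, p i ^ u i ∣ ∏ i, p i ^ v i ↔ u ≤ v := by
  classical
  refine ⟨fun h i => ?_, fun h => Finset.prod_dvd_prod_of_dvd _ _ fun i _ => pow_dvd_pow _ (h i)⟩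
  have hcop : (p i ^ u i).Coprime (∏ j ∈ Finset.univ.erase i, p j ^ v j) :=
    Nat.Coprime.prod_right fun j hj =>
      ((Nat.coprime_primes (hp i) (hp j)).2 (hinj.ne (Finset.ne_of_mem_erase hj).symm)).pow _ _
  have hdvd : p i ^ u i ∣ p i ^ v i * ∏ j ∈ Finset.univ.erase i, p j ^ v j := by
    rw [Finset.mul_prod_erase _ (fun j => p j ^ v j) (Finset.mem_univ i)]
    exact (Finset.dvd_prod_of_mem _ (Finset.mem_univ i)).trans h
  exact (Nat.pow_dvd_pow_iff_le_right (hp i).one_lt).1 (hcop.dvd_of_dvd_mul_right hdvd)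

theorem prod_prime_pow_dvd {ι : Type*} [Fintype ι] {p u : ι → ℕ} {N : ℕ}
    (hp : ∀ i, (p i).Prime) (hinj : p.Injective) (h : ∀ i, p i ^ u i ∣ N) :
    ∏ i, p i ^ u i ∣ N :=
  Fintype.prod_dvd_of_isRelPrime
    (fun i j hij => Nat.coprime_iff_isRelPrime.1 <|
      ((Nat.coprime_primes (hp i) (hp j)).2 (hinj.ne hij)).pow _ _) h

theorem exists_eq_two_pow_mul_odd_prime_pow {N : ℕ} (hN : N ≠ 0)
    (h : ∀ p q : ℕ, p.Prime → q.Prime → Odd p → Odd q → p ∣ N → q ∣ N → p = q) :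
    ∃ p a b : ℕ, p.Prime ∧ Odd p ∧ N = 2 ^ a * p ^ b := by
  obtain ⟨a, m, hm, rfl⟩ := Nat.exists_eq_two_pow_mul_odd hN
  by_cases hm1 : m = 1
  · exact ⟨3, a, 0, Nat.prime_three, by decide, by rw [hm1, pow_zero]⟩
  obtain ⟨p, hp, hpm⟩ := Nat.exists_prime_and_dvd hm1
  have hpodd := hm.of_dvd_nat hpm
  refine ⟨p, a, _, hp, hpodd, congrArg _ <| Nat.eq_prime_pow_of_unique_prime_dvd hm.pos.ne' ?_⟩
  exact fun {q} hq hqm => h q p hq hp (hm.of_dvd_nat hqm) hpodd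
    (hqm.mul_left _) (hpm.mul_left _)

end Arithmetic

section PowerGraph

variable {G H : Type*} [Group G] [Group H]

theorem powerGraph_eq_comparabilityGraph :
    powerGraph G = comparabilityGraph (zpowers : G → Subgroup G) := by
  simp only [powerGraph, comparabilityGraph, zpowers_le]

theorem powerGraph_adj {x y : G} :
    (powerGraph G).Adj x y ↔ x ≠ y ∧ (x ∈ zpowers y ∨ y ∈ zpowers x) :=
  SimpleGraph.fromRel_adj _ _ _

/-- An injective group homomorphism embeds power graphs. -/
def powerGraphEmbedding (φ : G →* H) (hφ : Function.Injective φ) :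
    powerGraph G ↪g powerGraph H where
  toFun := φ
  inj' := hφ
  map_rel_iff' {x y} := by
    have hmem (x y : G) : φ x ∈ zpowers (φ y) ↔ x ∈ zpowers y := by
      rw [← φ.map_zpowers, mem_map_iff_mem hφ]
    simp only [Function.Embedding.coeFn_mk, powerGraph_adj, hmem, hφ.ne_iff]

section Cyclic

theorem mem_zpowers_iff_orderOf_dvd [IsCyclic G] [Finite G] {x y : G} :
    x ∈ zpowers y ↔ orderOf x ∣ orderOf y := by
  classical
  have := Fintype.ofFinite G
  refine ⟨orderOf_dvd_of_mem_zpowers, fun h => ?_⟩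
  let torsion : Finset G := {z | z ^ orderOf y = 1}
  have hsub : (zpowers y : Set G).toFinset ⊆ torsion := fun z hz =>
    Finset.mem_filter.2 ⟨Finset.mem_univ z, orderOf_dvd_iff_pow_eq_one.1 <|
      orderOf_dvd_of_mem_zpowers (Set.mem_toFinset.1 hz)⟩
  have hcard : torsion.card ≤ (zpowers y : Set G).toFinset.card := by
    rw [Set.toFinset_card, ← Nat.card_eq_fintype_card, SetLike.coe_sort_coe, Nat.card_zpowers]
    exact IsCyclic.card_pow_eq_one_le (orderOf_pos y)
  have hx : x ∈ torsion := Finset.mem_filter.2 ⟨Finset.mem_univ x, orderOf_dvd_iff_pow_eq_one.1 h⟩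
  rwa [← Finset.eq_of_subset_of_card_le hsub hcard, Set.mem_toFinset] at hx

theorem powerGraph_adj_iff_orderOf_dvd [IsCyclic G] [Finite G] {x y : G} :
    (powerGraph G).Adj x y ↔ x ≠ y ∧ (orderOf x ∣ orderOf y ∨ orderOf y ∣ orderOf x) := by
  simp only [powerGraph_adj, mem_zpowers_iff_orderOf_dvd]

theorem exists_orderOf_eq_of_dvd_card [IsCyclic G] [Finite G] {d : ℕ} (hd : d ∣ Nat.card G) :
    ∃ x : G, orderOf x = d := by
  obtain ⟨g, hg⟩ := IsCyclic.exists_ofOrder_eq_natCard (α := G)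
  exact ⟨_, orderOf_pow_orderOf_div (orderOf_pos g).ne' (hg ▸ hd)⟩

theorem isChordal_powerGraph_of_card_dvd [IsCyclic G] [Finite G] {p q s : ℕ} (hp : p.Prime)
    (hq : q.Prime) (hcard : Nat.card G ∣ p ^ s * q) : IsChordal (powerGraph G) := by
  have orderOf_dvd (x : G) : orderOf x ∣ p ^ s * q := (_root_.orderOf_dvd_natCard x).trans hcard
  have adj {x y : G} (hxy : x ≠ y) (h : q ∣ Nat.card (zpowers x) ↔ q ∣ Nat.card (zpowers y)) :
      (comparabilityGraph zpowers).Adj x y := by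
    rw [Nat.card_zpowers, Nat.card_zpowers] at h
    rw [← powerGraph_eq_comparabilityGraph, powerGraph_adj_iff_orderOf_dvd]
    exact ⟨hxy, dvd_or_dvd_of_dvd_prime_pow_mul hp hq (orderOf_dvd x) (orderOf_dvd y) h⟩
  have hL : IsLowerSet {K : Subgroup G | ¬ q ∣ Nat.card K} := fun K K' hle hK h =>
    hK (h.trans (card_dvd_of_le hle))
  rw [powerGraph_eq_comparabilityGraph]
  exact isChordal_comparabilityGraph hL
    (fun x hx y hy hxy => adj hxy (iff_of_false hx hy))
    (fun x hx y hy hxy => adj hxy (iff_of_true (not_not.1 hx) (not_not.1 hy)))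

theorem not_isChordal_powerGraph_of_exponents [IsCyclic G] [Finite G] {ι : Type*} [Finite ι]
    {p k : ι → ℕ} (hp : ∀ j, (p j).Prime) (hinj : p.Injective)
    (hcard : ∀ j, p j ^ k j ∣ Nat.card G) {m : ℕ} (hm : 4 ≤ m) (e : Fin m → ι → ℕ)
    (heinj : e.Injective) (he : ∀ i j, e i j ≤ k j)
    (hcycle : cycleGraph m = comparabilityGraph e) : ¬ IsChordal (powerGraph G) := by
  have := Fintype.ofFinite ι
  have hdvd (i : Fin m) : ∏ j, p j ^ e i j ∣ Nat.card G :=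
    prod_prime_pow_dvd hp hinj fun j => (pow_dvd_pow _ (he i j)).trans (hcard j)
  choose x hx using fun i => exists_orderOf_eq_of_dvd_card (hdvd i)
  have hle (i j : Fin m) : zpowers (x i) ≤ zpowers (x j) ↔ e i ≤ e j := by
    rw [zpowers_le, mem_zpowers_iff_orderOf_dvd, hx, hx,
      prod_prime_pow_dvd_prod_prime_pow_iff hp hinj]
  have hxinj : x.Injective := fun i j hij =>
    heinj (((hle i j).1 (hij ▸ le_rfl)).antisymm ((hle j i).1 (hij ▸ le_rfl)))
  rw [powerGraph_eq_comparabilityGraph]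
  intro h
  refine (h m hm).false ?_
  rw [hcycle]
  exact comparabilityGraphEmbedding ⟨x, hxinj⟩ hle

theorem not_isChordal_powerGraph_of_sq_dvd [IsCyclic G] [Finite G] {p q : ℕ} (hp : p.Prime)
    (hq : q.Prime) (hpq : p ≠ q) (hp2 : p ^ 2 ∣ Nat.card G) (hq2 : q ^ 2 ∣ Nat.card G) :
    ¬ IsChordal (powerGraph G) := by
  refine not_isChordal_powerGraph_of_exponents (p := ![p, q]) (k := 2) (m := 4) ?_ ?_ ?_
    (by norm_num) ![![1, 0], ![1, 2], ![0, 1], ![2, 1]] (by decide) (by decide) ?_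
  · simp [Fin.forall_fin_two, hp, hq]
  · simp [Function.Injective, Fin.forall_fin_two, hpq, hpq.symm]
  · simp [Fin.forall_fin_two, hp2, hq2]
  · ext i j
    rw [comparabilityGraph_adj, Pi.le_def, Pi.le_def]
    revert i j
    decide

theorem not_isChordal_powerGraph_of_three_primes [IsCyclic G] [Finite G] {p q r : ℕ}
    (hp : p.Prime) (hq : q.Prime) (hr : r.Prime) (hpq : p ≠ q) (hpr : p ≠ r) (hqr : q ≠ r)
    (hpG : p ∣ Nat.card G) (hqG : q ∣ Nat.card G) (hrG : r ∣ Nat.card G) :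
    ¬ IsChordal (powerGraph G) := by
  refine not_isChordal_powerGraph_of_exponents (p := ![p, q, r]) (k := 1) (m := 6) ?_ ?_ ?_
    (by norm_num)
    ![![1, 0, 0], ![1, 1, 0], ![0, 1, 0], ![0, 1, 1], ![0, 0, 1], ![1, 0, 1]]
    (by decide) (by decide) ?_
  · simp [Fin.forall_fin_succ, hp, hq, hr]
  · simp [Function.Injective, Fin.forall_fin_succ, hpq, hpr, hqr, hpq.symm, hpr.symm, hqr.symm]
  · simp [Fin.forall_fin_succ, hpG, hqG, hrG]
  · ext i j
    rw [comparabilityGraph_adj, Pi.le_def, Pi.le_def]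
    revert i j
    decide

theorem isChordal_powerGraph_iff_of_two_dvd_card [IsCyclic G] [Finite G] (h : 2 ∣ Nat.card G) :
    IsChordal (powerGraph G) ↔
      ∃ p a b : ℕ, p.Prime ∧ Odd p ∧ Nat.card G = 2 ^ a * p ^ b ∧ (a ≤ 1 ∨ b ≤ 1) := by
  have two_ne {p : ℕ} (hp : Odd p) : 2 ≠ p := by
    rintro rfl
    contradiction
  constructor
  · intro hchordal
    obtain ⟨p, a, b, hp, hodd, hcard⟩ := exists_eq_two_pow_mul_odd_prime_pow Nat.card_pos.ne'
      fun p q hp hq hpodd hqodd hpG hqG => by_contra fun hpq =>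
        not_isChordal_powerGraph_of_three_primes Nat.prime_two hp hq (two_ne hpodd) (two_ne hqodd)
          hpq h hpG hqG hchordal
    refine ⟨p, a, b, hp, hodd, hcard, ?_⟩
    by_contra! ⟨ha, hb⟩
    exact not_isChordal_powerGraph_of_sq_dvd Nat.prime_two hp (two_ne hodd)
      (hcard ▸ (pow_dvd_pow 2 ha).mul_right _) (hcard ▸ (pow_dvd_pow p hb).mul_left _) hchordal
  · rintro ⟨p, a, b, hp, -, hcard, ha | hb⟩
    · refine isChordal_powerGraph_of_card_dvd hp Nat.prime_two (s := b) ?_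
      rw [hcard, mul_comm]
      exact mul_dvd_mul_left _ (pow_dvd_pow 2 ha)
    · refine isChordal_powerGraph_of_card_dvd Nat.prime_two hp (s := a) ?_
      rw [hcard]
      exact mul_dvd_mul_left _ (by simpa only [pow_one] using pow_dvd_pow p hb)

end Cyclic

theorem isClique_powerGraph_zpowers_of_prime_pow {x : G} {p k : ℕ} (hp : p.Prime)
    (hx : orderOf x = p ^ k) :
    (powerGraph G).IsClique (zpowers x : Set G) := by
  have : Finite (zpowers x) := Nat.finite_of_card_ne_zero <| by
    rw [Nat.card_zpowers, hx]
    exact (pow_pos hp.pos k).ne'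
  have orderOf_dvd (y : zpowers x) : orderOf y ∣ p ^ k := by
    rw [← hx, ← Nat.card_zpowers x]
    exact _root_.orderOf_dvd_natCard y
  intro y hy z hz hyz
  have hadj : (powerGraph (zpowers x)).Adj ⟨y, hy⟩ ⟨z, hz⟩ :=
    powerGraph_adj_iff_orderOf_dvd.2 ⟨fun h => hyz (congrArg Subtype.val h),
      dvd_or_dvd_of_dvd_prime_pow hp (orderOf_dvd _) (orderOf_dvd _)⟩
  exact (powerGraphEmbedding (zpowers x).subtype (zpowers x).subtype_injective).map_adj_iff.2 hadj

theorem isSimplicial_powerGraph_of_maximal {x : G} {p k : ℕ} (hp : p.Prime)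
    (hx : orderOf x = p ^ k) (hmax : ∀ y, x ∈ zpowers y → y ∈ zpowers x) :
    IsSimplicial (powerGraph G) x :=
  (isClique_powerGraph_zpowers_of_prime_pow hp hx).subset fun y hxy =>
    (powerGraph_adj.1 hxy).2.elim (hmax y) id

end PowerGraph

section Quaternion

open QuaternionGroup

variable {n : ℕ} [NeZero n]

theorem mem_zpowers_a_one_iff {w : QuaternionGroup n} :
    w ∈ zpowers (a 1 : QuaternionGroup n) ↔ ∃ i, w = a i := by
  rw [← mem_powers_iff_mem_zpowers, Submonoid.mem_powers_iff]
  simp only [a_one_pow]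
  constructor
  · rintro ⟨k, rfl⟩
    exact ⟨k, rfl⟩
  · rintro ⟨i, rfl⟩
    exact ⟨i.val, congrArg a (ZMod.natCast_zmod_val i)⟩

theorem mem_zpowers_xa_of_xa_mem_zpowers {i : ZMod (2 * n)} {w : QuaternionGroup n}
    (h : xa i ∈ zpowers w) : w ∈ zpowers (xa i) := by
  cases w with
  | a j =>
    have hle : zpowers (a j : QuaternionGroup n) ≤ zpowers (a 1) :=
      zpowers_le.2 (mem_zpowers_a_one_iff.2 ⟨j, rfl⟩)
    obtain ⟨k, hk⟩ := mem_zpowers_a_one_iff.1 (hle h)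
    cases hk
  | xa j =>
    have heq : zpowers (xa i : QuaternionGroup n) = zpowers (xa j) :=
      eq_of_le_of_card_ge (zpowers_le.2 h) (by simp only [Nat.card_zpowers, orderOf_xa, le_refl])
    exact heq ▸ mem_zpowers (xa j)

theorem isSimplicial_powerGraph_xa (i : ZMod (2 * n)) :
    IsSimplicial (powerGraph (QuaternionGroup n)) (xa i) :=
  isSimplicial_powerGraph_of_maximal (k := 2) Nat.prime_two (orderOf_xa i)
    fun _ => mem_zpowers_xa_of_xa_mem_zpowers

theorem isChordal_powerGraph_quaternionGroup_iff :
    IsChordal (powerGraph (QuaternionGroup n)) ↔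
      IsChordal (powerGraph (zpowers (a 1 : QuaternionGroup n))) := by
  refine isChordal_iff_of_isSimplicial
    (powerGraphEmbedding (zpowers (a 1)).subtype (zpowers (a 1)).subtype_injective) fun w hw => ?_
  cases w with
  | a i => exact (hw ⟨⟨a i, mem_zpowers_a_one_iff.2 ⟨i, rfl⟩⟩, rfl⟩).elim
  | xa i => exact isSimplicial_powerGraph_xa i

end Quaternion

theorem stmt14 (n : ℕ) (hn : 1 ≤ n) :
    IsChordal (powerGraph (QuaternionGroup n)) ↔
      ∃ (p a b : ℕ), p.Prime ∧ Odd p ∧ 2 * n = 2 ^ a * p ^ b ∧ (a ≤ 1 ∨ b ≤ 1) := by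
  have : NeZero n := ⟨by lia⟩
  have hcard : Nat.card (zpowers (QuaternionGroup.a 1 : QuaternionGroup n)) = 2 * n := by
    rw [Nat.card_zpowers, QuaternionGroup.orderOf_a_one]
  have heven : 2 ∣ Nat.card (zpowers (QuaternionGroup.a 1 : QuaternionGroup n)) :=
    hcard.symm ▸ dvd_mul_right 2 n
  rw [isChordal_powerGraph_quaternionGroup_iff, isChordal_powerGraph_iff_of_two_dvd_card heven,
    hcard]
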